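/- arXiv:2007.05145 — 2 statements merged into one kernel-verified Lean document; each statement's English description precedes it below -/
import Mathlib

section
/- Let C be a class of binary classifiers on a countable domain X with VC dimension d ≥ 2, let P be a probability distribution on X, let T, n ∈ ℕ with n ≥ 1, let δ ∈ (0,1], and set ε := (9/(2n))·(d(T+1)·ln(2n) + ln(1/δ)). Then the probability over independent samples x ∼ P^n and z ∼ P^n that there exist h ∈ C and c = (c_1,…,c_T) ∈ C^T with rej_z(S(h,c)) > 2·rej_x(S(h,c)) + ε is at most δ. -/
open MeasureTheory

/-- A finite set `A` is shattered by `C` if every boolean labeling of `A` is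
realized by some member of `C`. -/
def Shatters {X : Type*} (C : Set (X → Bool)) (A : Finset X) : Prop :=
  ∀ b : X → Bool, ∃ g ∈ C, ∀ a ∈ A, g a = b a

/-- `C` has VC dimension `d`: some set of size `d` is shattered and no larger set is. -/
def VCDim {X : Type*} (C : Set (X → Bool)) (d : ℕ) : Prop :=
  (∃ A : Finset X, A.card = d ∧ Shatters C A) ∧ ∀ A : Finset X, Shatters C A → A.card ≤ d

open Classical in
/-- indicator of a proposition. -/
noncomputable def ind (Q : Prop) : ℝ := if Q then 1 else 0

open Classical in
/-- swap coordinates according to `s`. -/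
noncomputable def swp {X : Type*} {n : ℕ} (s : Fin n → Bool) (ω : (Fin n → X) × (Fin n → X)) :
    (Fin n → X) × (Fin n → X) :=
  (fun i => if s i then ω.2 i else ω.1 i, fun i => if s i then ω.1 i else ω.2 i)

lemma swp_swp {X : Type*} {n : ℕ} (s : Fin n → Bool) (ω : (Fin n → X) × (Fin n → X)) :
    swp s (swp s ω) = ω := by
  ext i <;> simp only [swp] <;> cases s i <;> simp

lemma swp_pre {X : Type*} [Countable X] [MeasurableSpace X] [MeasurableSingletonClass X]
    (P : Measure X) [IsProbabilityMeasure P] {n : ℕ} (s : Fin n → Bool)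
    (E : Set ((Fin n → X) × (Fin n → X))) :
    ((Measure.pi fun _ : Fin n => P).prod (Measure.pi fun _ : Fin n => P)) (swp s ⁻¹' E) =
    ((Measure.pi fun _ : Fin n => P).prod (Measure.pi fun _ : Fin n => P)) E := by
  set μ := ((Measure.pi fun _ : Fin n => P).prod (Measure.pi fun _ : Fin n => P)) with hμ
  have hm : Measurable (swp s : (Fin n → X) × (Fin n → X) → _) := measurable_of_countable _
  have key : μ.map (swp s) = μ := by
    refine Measure.ext_of_singleton ?_
    intro ω
    rw [Measure.map_apply hm (measurableSet_singleton _)]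
    have : swp s ⁻¹' {ω} = {swp s ω} := by
      ext ω'
      simp only [Set.mem_preimage, Set.mem_singleton_iff]
      constructor
      · rintro rfl; exact (swp_swp s _).symm
      · rintro rfl; exact swp_swp s _
    rw [this]
    have hs : ∀ ω : (Fin n → X) × (Fin n → X), μ {ω} = ∏ i, (P {ω.1 i} * P {ω.2 i}) := by
      rintro ⟨x, z⟩
      rw [hμ, ← Set.singleton_prod_singleton, Measure.prod_prod, Measure.pi_singleton,
        Measure.pi_singleton, Finset.prod_mul_distrib]
    rw [hs, hs]
    refine Finset.prod_congr rfl fun i _ => ?_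
    simp only [swp]
    cases s i <;> simp [mul_comm]
  conv_rhs => rw [← key, Measure.map_apply hm (Set.to_countable E).measurableSet]

open Classical in
lemma avg_bound {X : Type*} [Countable X] [MeasurableSpace X] [MeasurableSingletonClass X]
    (P : Measure X) [IsProbabilityMeasure P] {n : ℕ}
    (E : Set ((Fin n → X) × (Fin n → X))) (δ : ℝ) (hδ : 0 ≤ δ)
    (h : ∀ ω, ((Finset.univ.filter fun s : Fin n → Bool => swp s ω ∈ E).card : ℝ) ≤ 2 ^ n * δ) :
    (((Measure.pi fun _ : Fin n => P).prod (Measure.pi fun _ : Fin n => P)) E).toReal ≤ δ := by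
  set μ := ((Measure.pi fun _ : Fin n => P).prod (Measure.pi fun _ : Fin n => P)) with hμ
  have h1 : (2 ^ n : ENNReal) * μ E = ∑ s : Fin n → Bool, μ (swp s ⁻¹' E) := by
    rw [Finset.sum_congr rfl (fun s _ => swp_pre P s E)]
    simp [hμ]
  have h2 : ∑ s : Fin n → Bool, μ (swp s ⁻¹' E) ≤ ENNReal.ofReal (2 ^ n * δ) := by
    have : ∀ s : Fin n → Bool, μ (swp s ⁻¹' E) = ∫⁻ ω, (swp s ⁻¹' E).indicator 1 ω ∂μ := by
      intro s
      rw [lintegral_indicator_one (Set.to_countable _).measurableSet]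
    simp_rw [this]
    rw [← lintegral_finsetSum _ (fun s _ => measurable_of_countable _)]
    calc _ ≤ ∫⁻ ω, ENNReal.ofReal (2 ^ n * δ) ∂μ := by
            refine lintegral_mono fun ω => ?_
            have e : ∑ s : Fin n → Bool, (swp s ⁻¹' E).indicator (1 : (Fin n → X) × (Fin n → X) → ENNReal) ω
              = ((Finset.univ.filter fun s : Fin n → Bool => swp s ω ∈ E).card : ENNReal) := by
              simp [Set.indicator_apply]
            simp only [e]
            rw [← ENNReal.ofReal_natCast]
            exact ENNReal.ofReal_le_ofReal (h ω)
      _ = _ := by simp [hμ]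
  rw [← h1] at h2
  have h3 := ENNReal.toReal_mono ENNReal.ofReal_ne_top h2
  rw [ENNReal.toReal_ofReal (by positivity), ENNReal.toReal_mul] at h3
  simp only [ENNReal.toReal_pow, ENNReal.toReal_ofNat] at h3
  exact le_of_mul_le_mul_left h3 (by positivity)

lemma exp_num : Real.exp (4/9) + Real.exp (-(8/9)) ≤ 2 := by
  set u := Real.exp (4/9) with hu
  have hpos : 0 < u := Real.exp_pos _
  have h1 : 1 ≤ u := Real.one_le_exp (by norm_num)
  have h2 : u ≤ 1.6 := by
    have h9 : u ^ 9 = Real.exp 1 ^ 4 := by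
      rw [hu, ← Real.exp_nat_mul, ← Real.exp_nat_mul]; norm_num
    have he : Real.exp 1 ^ 4 ≤ 2.72 ^ 4 :=
      pow_le_pow_left₀ (Real.exp_pos _).le (by linarith [Real.exp_one_lt_d9]) 4
    by_contra hc
    push Not at hc
    have := pow_lt_pow_left₀ hc (by norm_num) (n := 9) (by norm_num)
    rw [h9] at this
    norm_num at this he
    linarith
  have h3 : Real.exp (-(8/9)) = (u ^ 2)⁻¹ := by
    rw [hu, ← Real.exp_nat_mul, ← Real.exp_neg]; norm_num
  rw [h3]
  have h4 : (u^2)⁻¹ ≤ 2 - u := by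
    rw [inv_le_iff_one_le_mul₀ (by positivity)]
    nlinarith [mul_nonneg (sub_nonneg.2 h1) (sub_nonneg.2 h2)]
  linarith

open Classical in
lemma fixed_bound {X : Type*} {n : ℕ} (R : X → Prop) (ω : (Fin n → X) × (Fin n → X)) (e : ℝ) :
    ((Finset.univ.filter fun s : Fin n → Bool =>
      2 * (∑ i, ind (R ((swp s ω).1 i))) + e <
        ∑ i, ind (R ((swp s ω).2 i))).card : ℝ) ≤ 2 ^ n * Real.exp (-(4/9) * e) := by
  let r : X → ℝ := fun a => ind (R a)
  let f : Fin n → Bool → ℝ := fun i b => Real.exp ((4/9) *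
    ((if b then r (ω.1 i) else r (ω.2 i)) - 2 * (if b then r (ω.2 i) else r (ω.1 i))))
  have hterm : ∀ s : Fin n → Bool, Real.exp ((4/9) *
      ((∑ i, r ((swp s ω).2 i)) - 2 * (∑ i, r ((swp s ω).1 i)) - e)) =
      Real.exp (-(4/9) * e) * ∏ i, f i (s i) := by
    intro s
    rw [← Real.exp_sum, ← Real.exp_add]
    congr 1
    rw [← Finset.mul_sum, Finset.sum_sub_distrib, ← Finset.mul_sum]
    have a1 : ∀ i, r ((swp s ω).2 i) = if s i then r (ω.1 i) else r (ω.2 i) := by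
      intro i; simp only [swp]; cases s i <;> simp
    have a2 : ∀ i, r ((swp s ω).1 i) = if s i then r (ω.2 i) else r (ω.1 i) := by
      intro i; simp only [swp]; cases s i <;> simp
    simp only [a1, a2]
    ring
  have hfac : ∀ i, ∑ b, f i b ≤ 2 := by
    intro i
    have hn := exp_num
    have h4 : Real.exp (-(4/9)) ≤ 1 := Real.exp_le_one_iff.2 (by norm_num)
    simp only [f, r, ind, Fintype.sum_bool]
    by_cases h1 : R (ω.1 i) <;> by_cases h2 : R (ω.2 i) <;> simp [h1, h2] <;> norm_num <;>
      linarith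
  calc ((Finset.univ.filter fun s : Fin n → Bool =>
      2 * (∑ i, r ((swp s ω).1 i)) + e < ∑ i, r ((swp s ω).2 i)).card : ℝ)
      = ∑ s : Fin n → Bool, if 2 * (∑ i, r ((swp s ω).1 i)) + e < ∑ i, r ((swp s ω).2 i)
          then (1:ℝ) else 0 := by simp
    _ ≤ ∑ s : Fin n → Bool, Real.exp (-(4/9) * e) * ∏ i, f i (s i) := by
        refine Finset.sum_le_sum fun s _ => ?_
        rw [← hterm]
        split_ifs with h
        · exact Real.one_le_exp (by linarith)
        · exact (Real.exp_pos _).le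
    _ = Real.exp (-(4/9) * e) * ∏ i, ∑ b, f i b := by
        rw [← Finset.mul_sum, Finset.prod_univ_sum, Fintype.piFinset_univ]
    _ ≤ Real.exp (-(4/9) * e) * 2 ^ n := by
        refine mul_le_mul_of_nonneg_left ?_ (Real.exp_pos _).le
        calc ∏ i, ∑ b, f i b ≤ ∏ i : Fin n, (2:ℝ) :=
              Finset.prod_le_prod (fun i _ => Finset.sum_nonneg fun b _ => (Real.exp_pos _).le)
                (fun i _ => hfac i)
          _ = 2 ^ n := by simp
    _ = _ := mul_comm _ _

/-- Sauer-Shelah. -/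
lemma sauer {X : Type*} [DecidableEq X] (C : Set (X → Bool)) (d : ℕ) (hC : VCDim C d) (A : Finset X) :
    ∃ F : Finset (Finset X), F.card ≤ (A.card + 1) ^ d ∧
      ∀ g ∈ C, A.filter (fun a => g a = true) ∈ F := by
  classical
  let F : Finset (Finset X) := A.powerset.filter fun B => ∃ g ∈ C, A.filter (fun a => g a = true) = B
  refine ⟨F, ?_, fun g hg => by simp [F]; exact ⟨g, hg, rfl⟩⟩
  have hsh : F.shatterer ⊆ (Finset.range (d+1)).biUnion fun i => A.powersetCard i := by
    intro S hS
    rw [Finset.mem_shatterer] at hS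
    have hSA : S ⊆ A := by
      obtain ⟨u, hu, hSu⟩ := hS (Finset.Subset.refl S)
      simp only [F, Finset.mem_filter, Finset.mem_powerset] at hu
      exact (Finset.inter_eq_left.1 hSu).trans hu.1
    have hSC : Shatters C S := by
      intro b
      obtain ⟨u, hu, hSu⟩ := hS (Finset.filter_subset (fun a => b a = true) S)
      simp only [F, Finset.mem_filter, Finset.mem_powerset] at hu
      obtain ⟨_, g, hg, rfl⟩ := hu
      refine ⟨g, hg, fun a ha => ?_⟩
      have := Finset.ext_iff.1 hSu a
      simp only [Finset.mem_inter, Finset.mem_filter, ha, hSA ha, true_and] at this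
      exact Bool.eq_iff_iff.2 this
    have := hC.2 S hSC
    simp only [Finset.mem_biUnion, Finset.mem_range, Finset.mem_powersetCard]
    exact ⟨S.card, by omega, hSA, rfl⟩
  calc F.card ≤ F.shatterer.card := Finset.card_le_card_shatterer F
    _ ≤ _ := Finset.card_le_card hsh
    _ ≤ ∑ i ∈ Finset.range (d+1), (A.powersetCard i).card := Finset.card_biUnion_le
    _ ≤ ∑ i ∈ Finset.range (d+1), A.card ^ i * 1 ^ (d - i) * d.choose i := by
        refine Finset.sum_le_sum fun i hi => ?_
        rw [Finset.card_powersetCard, one_pow, mul_one]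
        have h1 := Nat.choose_le_pow A.card i
        have h2 : 1 ≤ d.choose i := Nat.choose_pos (by simp at hi; omega)
        nlinarith
    _ = (A.card + 1) ^ d := (add_pow _ _ _).symm

open Classical in
lemma ncard_eq_sum {n : ℕ} (Q : Fin n → Prop) :
    (Set.ncard {i | Q i} : ℝ) = ∑ i, ind (Q i) := by
  rw [Set.ncard_eq_toFinset_card']
  simp [ind]




/-- for a class `C` of VC dimension `d ≥ 2`, distribution `P`, `T, n ∈ ℕ`
with `n ≥ 1`, `δ ∈ (0,1]`, and `ε = (9/(2n))(d(T+1)ln(2n) + ln(1/δ))`: the probability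
over `x, z ∼ Pⁿ` that some `h ∈ C`, `c ∈ C^T` have
`rej_z(S(h,c)) > 2·rej_x(S(h,c)) + ε` is at most `δ`. -/
theorem stmt7 {X : Type*} [Countable X] [MeasurableSpace X] [MeasurableSingletonClass X]
    (C : Set (X → Bool)) (d : ℕ) (hd : 2 ≤ d) (hC : VCDim C d)
    (P : Measure X) [IsProbabilityMeasure P] (T n : ℕ) (hn : 1 ≤ n)
    (δ : ℝ) (hδ0 : 0 < δ) (hδ1 : δ ≤ 1) (ε : ℝ)
    (hε : ε = (9 / (2 * (n : ℝ))) *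
      ((d : ℝ) * ((T : ℝ) + 1) * Real.log (2 * n) + Real.log (1 / δ))) :
    (((Measure.pi fun _ : Fin n => P).prod (Measure.pi fun _ : Fin n => P))
      {ω : (Fin n → X) × (Fin n → X) | ∃ h ∈ C, ∃ c : Fin T → X → Bool, (∀ i, c i ∈ C) ∧
        2 * ((Set.ncard {i : Fin n | ω.1 i ∉ {a : X | ∀ j, c j a = h a}} : ℝ) / n) + ε <
          (Set.ncard {i : Fin n | ω.2 i ∉ {a : X | ∀ j, c j a = h a}} : ℝ) / n}).toReal
      ≤ δ := by
  classical
  have hn0 : (0:ℝ) < n := by exact_mod_cast hn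
  refine avg_bound P _ δ hδ0.le fun ω => ?_
  let A : Finset X := Finset.univ.image ω.1 ∪ Finset.univ.image ω.2
  have hA : A.card ≤ 2 * n := by
    calc A.card ≤ _ := Finset.card_union_le _ _
      _ ≤ n + n := by
        gcongr <;> exact Finset.card_image_le.trans (by simp)
      _ = 2 * n := by ring
  have hA1 : ∀ s i, (swp s ω).1 i ∈ A := by
    intro s i; simp only [swp, A]; cases s i <;> simp
  have hA2 : ∀ s i, (swp s ω).2 i ∈ A := by
    intro s i; simp only [swp, A]; cases s i <;> simp
  obtain ⟨F, hF, hFm⟩ := sauer C d hC A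
  let R : Finset X × (Fin T → Finset X) → X → Prop := fun p a => ∃ j, ¬ (a ∈ p.2 j ↔ a ∈ p.1)
  let I : Finset (Finset X × (Fin T → Finset X)) := F ×ˢ Fintype.piFinset fun _ => F
  let G : Finset X × (Fin T → Finset X) → Finset (Fin n → Bool) := fun p =>
    Finset.univ.filter fun s : Fin n → Bool =>
      2 * (∑ i, ind (R p ((swp s ω).1 i))) + n * ε <
        ∑ i, ind (R p ((swp s ω).2 i))
  have hI : I.card = F.card ^ (T + 1) := by
    simp [I, pow_succ, mul_comm]
  refine le_trans (b := ((I.biUnion G).card : ℝ)) ?_ ?_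
  · norm_cast
    refine Finset.card_le_card ?_
    intro s hs
    simp only [Finset.mem_filter, Finset.mem_univ, true_and, Set.mem_ofPred_eq] at hs
    obtain ⟨h, hh, c, hc, hlt⟩ := hs
    let p : Finset X × (Fin T → Finset X) :=
      (A.filter (fun a => h a = true), fun j => A.filter (fun a => c j a = true))
    have hp : p ∈ I := by
      simp only [I, p, Finset.mem_product, Fintype.mem_piFinset]
      exact ⟨hFm h hh, fun j => hFm _ (hc j)⟩
    have hR : ∀ a ∈ A, (¬ ∀ j, c j a = h a) ↔ R p a := by
      intro a ha
      simp only [R, p, Finset.mem_filter, ha, true_and, not_forall]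
      refine exists_congr fun j => not_congr ?_
      exact Bool.eq_iff_iff
    refine Finset.mem_biUnion.2 ⟨p, hp, ?_⟩
    simp only [G, Finset.mem_filter, Finset.mem_univ, true_and]
    have e1 : {i : Fin n | ¬ ∀ j, c j ((swp s ω).1 i) = h ((swp s ω).1 i)} =
        {i | R p ((swp s ω).1 i)} := Set.ext fun i => hR _ (hA1 s i)
    have e2 : {i : Fin n | ¬ ∀ j, c j ((swp s ω).2 i) = h ((swp s ω).2 i)} =
        {i | R p ((swp s ω).2 i)} := Set.ext fun i => hR _ (hA2 s i)
    rw [e1, e2, ncard_eq_sum, ncard_eq_sum, lt_div_iff₀ hn0] at hlt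
    refine lt_of_eq_of_lt ?_ hlt
    field_simp
  · have hn1 : (1:ℝ) ≤ n := by exact_mod_cast hn
    have hcard : ((I.biUnion G).card : ℝ) ≤ I.card * (2 ^ n * Real.exp (-(4/9) * (n * ε))) := by
      calc ((I.biUnion G).card : ℝ) ≤ ∑ p ∈ I, ((G p).card : ℝ) := by
            rw [← Nat.cast_sum]
            exact Nat.cast_le.2 Finset.card_biUnion_le
        _ ≤ ∑ p ∈ I, (2 ^ n * Real.exp (-(4/9) * (n * ε))) :=
            Finset.sum_le_sum fun p _ => fixed_bound (R p) ω _
        _ = _ := by simp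
    refine hcard.trans ?_
    have hIc : (I.card : ℝ) ≤ Real.exp (2 * (d * (T + 1) * Real.log (2 * n))) := by
      have h1 : (F.card : ℝ) ≤ ((2 * n : ℝ) ^ 2) ^ d := by
        calc (F.card : ℝ) ≤ ((A.card : ℝ) + 1) ^ d := by exact_mod_cast hF
          _ ≤ ((2 * n : ℝ) ^ 2) ^ d := by
            have : (A.card : ℝ) ≤ 2 * n := by exact_mod_cast hA
            refine pow_le_pow_left₀ (by positivity) ?_ d
            nlinarith
      have h2 : Real.exp (2 * (d * (T + 1) * Real.log (2 * n))) =
          (((2 * n : ℝ) ^ 2) ^ d) ^ (T + 1) := by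
        have : 2 * ((d:ℝ) * (T + 1) * Real.log (2 * n)) =
          ((2 * d * (T + 1) : ℕ) : ℝ) * Real.log (2 * n) := by push_cast; ring
        rw [this, Real.exp_nat_mul, Real.exp_log (by positivity), ← pow_mul, ← pow_mul, mul_assoc]
      rw [h2, hI]
      push_cast
      exact pow_le_pow_left₀ (by positivity) h1 _
    have hexp : -(4/9) * (n * ε) =
        -(2 * (d * (T + 1) * Real.log (2 * n))) + 2 * Real.log δ := by
      rw [hε, one_div δ, Real.log_inv]
      field_simp
      ring
    have hlog : Real.log δ ≤ 0 := Real.log_nonpos hδ0.le hδ1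
    calc (I.card : ℝ) * (2 ^ n * Real.exp (-(4/9) * (n * ε)))
        ≤ Real.exp (2 * (d * (T + 1) * Real.log (2 * n))) *
          (2 ^ n * Real.exp (-(4/9) * (n * ε))) := by gcongr
      _ = 2 ^ n * Real.exp (2 * Real.log δ) := by
          rw [hexp, mul_left_comm, ← Real.exp_add]; congr 2; ring
      _ ≤ 2 ^ n * Real.exp (Real.log δ) := by gcongr; linarith
      _ = 2 ^ n * δ := by rw [Real.exp_log hδ0]
end

section
/- Let C be a class of binary classifiers on a countable domain X with VC dimension d ≥ 2, let n ≥ 1, let δ > 0, let ε ≥ 8·ln(8/δ)/n + √(8d·ln(2n)/n), let T ≤ 1/ε be a positive integer, let f, h ∈ C, and let Q be any probability distribution on X. Then the probability over z ∼ Q^n that there exists c = (c_1,…,c_T) ∈ C^T with err_Q(h|_{S(h,c)}, f) > 2ε and err_z(h|_{S(h,c)}, f) ≤ ε is at most δ. -/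
open MeasureTheory

open scoped ENNReal
open Classical in
/-- traces of the class on a finite set -/
noncomputable def tracesOn {X : Type*} (C : Set (X → Bool)) (P : Finset X) : Finset (Finset X) :=
  P.powerset.filter (fun B => ∃ g ∈ C, B = P.filter (fun a => g a = true))

lemma two_mul_choose_le (m k : ℕ) (hk : 2 ≤ k) : 2 * m.choose k ≤ m ^ k := by
  calc 2 * m.choose k ≤ k.factorial * m.choose k := by
        gcongr
        calc 2 = Nat.factorial 2 := rfl
          _ ≤ k.factorial := Nat.factorial_le hk
    _ = m.descFactorial k := (Nat.descFactorial_eq_factorial_mul_choose m k).symm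
    _ ≤ m ^ k := Nat.descFactorial_le_pow m k

lemma sum_choose_le (m d : ℕ) (hm : 2 ≤ m) (hd : 2 ≤ d) :
    ∑ i ∈ Finset.range (d + 1), m.choose i ≤ m ^ d := by
  induction d, hd using Nat.le_induction with
  | base =>
    obtain ⟨k, rfl⟩ := Nat.exists_eq_add_of_le hm
    have := Nat.triangle_succ (k + 1)
    have h2 : 2 * (2 + k).choose 2 = (2 + k) * (1 + k) := by
      rw [Nat.choose_two_right, mul_comm, Nat.div_mul_cancel]
      · congr 1; omega
      · exact (Nat.even_mul_pred_self _).two_dvd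
    simp [Finset.sum_range_succ]
    nlinarith
  | succ d hd ih =>
    rw [Finset.sum_range_succ]
    have := two_mul_choose_le m (d + 1) (by omega)
    have h3 : 2 * m ^ d ≤ m ^ (d + 1) := by rw [pow_succ, mul_comm]; gcongr
    omega

open Classical in
lemma card_tracesOn_le {X : Type*} (C : Set (X → Bool)) (d : ℕ) (hd : 2 ≤ d) (hC : VCDim C d)
    (m : ℕ) (hm : 2 ≤ m) (P : Finset X) (hP : P.card ≤ m) : (tracesOn C P).card ≤ m ^ d := by
  refine (Finset.card_le_card_shatterer _).trans ?_
  have hsub : (tracesOn C P).shatterer ⊆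
      (Finset.range (d + 1)).biUnion (fun i => P.powersetCard i) := by
    intro s hs
    rw [Finset.mem_shatterer] at hs
    have hsP : s ⊆ P := by
      obtain ⟨u, hu, hsu⟩ := hs (Finset.Subset.refl s)
      simp only [tracesOn, Finset.mem_filter, Finset.mem_powerset] at hu
      exact (Finset.inter_eq_left.mp hsu).trans hu.1
    have hsh : Shatters C s := by
      intro b
      obtain ⟨u, hu, hsu⟩ := hs (Finset.filter_subset (fun a => b a = true) s)
      simp only [tracesOn, Finset.mem_filter, Finset.mem_powerset] at hu
      obtain ⟨-, g, hg, rfl⟩ := hu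
      refine ⟨g, hg, fun a ha => ?_⟩
      have h1 := Finset.ext_iff.mp hsu a
      simp only [Finset.mem_inter, Finset.mem_filter, ha, hsP ha, true_and] at h1
      exact Bool.eq_iff_iff.mpr h1
    have := hC.2 s hsh
    simp only [Finset.mem_biUnion, Finset.mem_range, Finset.mem_powersetCard]
    exact ⟨s.card, by omega, hsP, rfl⟩
  calc _ ≤ _ := Finset.card_le_card hsub
    _ ≤ ∑ i ∈ Finset.range (d + 1), (P.powersetCard i).card := Finset.card_biUnion_le
    _ ≤ ∑ i ∈ Finset.range (d + 1), m.choose i := by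
        gcongr with i
        rw [Finset.card_powersetCard]
        exact Nat.choose_le_choose i hP
    _ ≤ m ^ d := sum_choose_le m d hm hd

open Classical in
/-- pair weight -/
noncomputable def wt {X : Type*} (D : Set X) (p : X × X) : ℝ≥0∞ :=
  ENNReal.ofReal (Real.exp (-(5/8) * (if p.1 ∈ D then 1 else 0))) *
    ENNReal.ofReal (Real.exp ((3/8) * (if p.2 ∈ D then 1 else 0)))

lemma wt_add_swap {X : Type*} (D : Set X) (p : X × X) : wt D p + wt D p.swap ≤ 2 := by
  have key : Real.exp (-(5/8)) + Real.exp (3/8) ≤ 2 := by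
    have h := Real.cosh_le_exp_half_sq (1/2)
    rw [Real.cosh_eq] at h
    have e1 : Real.exp (-(5/8)) = Real.exp (-(1/2)) * Real.exp (-(1/8)) := by
      rw [← Real.exp_add]; norm_num
    have e2 : Real.exp (3/8) = Real.exp (1/2) * Real.exp (-(1/8)) := by
      rw [← Real.exp_add]; norm_num
    have e3 : Real.exp ((1/2)^2/2) * Real.exp (-(1/8)) = 1 := by
      rw [← Real.exp_add]; norm_num
    have := Real.exp_pos (-(1/8))
    rw [e1, e2]
    nlinarith
  have key2 : Real.exp (-(5/8)) * Real.exp (3/8) ≤ 1 := by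
    rw [← Real.exp_add]; apply Real.exp_le_one_iff.mpr; norm_num
  have two : (2 : ℝ≥0∞) = ENNReal.ofReal 2 := by simp
  unfold wt
  simp only [Prod.fst_swap, Prod.snd_swap]
  simp only [← ENNReal.ofReal_mul (Real.exp_pos _).le]
  rw [← ENNReal.ofReal_add (by positivity) (by positivity), two]
  apply ENNReal.ofReal_le_ofReal
  by_cases h1 : p.1 ∈ D <;> by_cases h2 : p.2 ∈ D <;> simp [h1, h2]
  · linarith
  · linarith
  · linarith
  · norm_num

/-- conditional swap -/
def sw {X : Type*} (b : Bool) (p : X × X) : X × X := bif b then p.swap else p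

lemma sum_prod_wt {X : Type*} {n : ℕ} (D : Set X) (w : Fin n → X × X) :
    ∑ σ : Fin n → Bool, ∏ i, wt D (sw (σ i) (w i)) ≤ 2 ^ n := by
  have h := Finset.prod_univ_sum (fun _ : Fin n => (Finset.univ : Finset Bool))
    (fun i b => wt D (sw b (w i)))
  rw [Fintype.piFinset_univ] at h
  rw [← h]
  calc _ ≤ ∏ i : Fin n, (2 : ℝ≥0∞) := by
        apply Finset.prod_le_prod'
        intro i _
        simp [sw]
        rw [add_comm]; exact wt_add_swap D (w i)
    _ = 2 ^ n := by simp

open Classical in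
/-- points of a double sample -/
noncomputable def pts {X : Type*} {n : ℕ} (w : Fin n → X × X) : Finset X :=
  Finset.univ.biUnion (fun i => {(w i).1, (w i).2})

lemma pts_sw {X : Type*} {n : ℕ} (w : Fin n → X × X) (σ : Fin n → Bool) :
    pts (fun i => sw (σ i) (w i)) = pts w := by
  unfold pts
  congr 1
  funext i
  rcases h : σ i with _ | _
  · simp only [sw, h, cond_false]
  · simp only [sw, h, cond_true, Prod.fst_swap, Prod.snd_swap]
    ext a; simp only [Finset.mem_insert, Finset.mem_singleton, or_comm]

lemma card_pts {X : Type*} {n : ℕ} (w : Fin n → X × X) : (pts w).card ≤ 2 * n := by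
  classical
  unfold pts
  refine (Finset.card_biUnion_le_card_mul _ _ 2 (fun i _ => ?_)).trans ?_
  · convert! Finset.card_le_two
  · simp [mul_comm]

/-- error-agreement set from traces -/
def dset {X : Type*} {T : ℕ} (f h : X → Bool) (B : Fin T → Finset X) : Set X :=
  {a | h a ≠ f a ∧ ∀ j, (a ∈ B j ↔ h a = true)}

/-- total weight -/
noncomputable def totW {X : Type*} (C : Set (X → Bool)) (f h : X → Bool) (T : ℕ) {n : ℕ}
    (w : Fin n → X × X) : ℝ≥0∞ :=
  ∑ B ∈ Fintype.piFinset (fun _ : Fin T => tracesOn C (pts w)), ∏ i, wt (dset f h B) (w i)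

lemma sum_totW_le {X : Type*} (C : Set (X → Bool)) (d : ℕ) (hd : 2 ≤ d) (hC : VCDim C d)
    (f h : X → Bool) (T : ℕ) {n : ℕ} (hn : 1 ≤ n) (w : Fin n → X × X) :
    ∑ σ : Fin n → Bool, totW C f h T (fun i => sw (σ i) (w i)) ≤
      2 ^ n * (((2 * n) ^ d) ^ T : ℕ) := by
  unfold totW
  simp only [pts_sw]
  rw [Finset.sum_comm]
  calc _ ≤ ∑ B ∈ Fintype.piFinset (fun _ : Fin T => tracesOn C (pts w)), (2 : ℝ≥0∞) ^ n :=
        Finset.sum_le_sum (fun B _ => sum_prod_wt _ w)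
    _ = 2 ^ n * ((tracesOn C (pts w)).card ^ T : ℕ) := by
        simp [Fintype.card_piFinset, mul_comm]
    _ ≤ _ := by
        gcongr
        exact card_tracesOn_le C d hd hC (2 * n) (by omega) _ (card_pts w)

lemma lintegral_totW_le {X : Type*} [Countable X] [MeasurableSpace X] [MeasurableSingletonClass X]
    (C : Set (X → Bool)) (d : ℕ) (hd : 2 ≤ d) (hC : VCDim C d)
    (f h : X → Bool) (T : ℕ) {n : ℕ} (hn : 1 ≤ n) (Q : Measure X) [IsProbabilityMeasure Q] :
    ∫⁻ w, totW C f h T w ∂(Measure.pi fun _ : Fin n => Q.prod Q) ≤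
      (((2 * n) ^ d) ^ T : ℕ) := by
  have hmp : ∀ σ : Fin n → Bool, MeasurePreserving
      (fun (w : Fin n → X × X) i => sw (σ i) (w i))
      (Measure.pi fun _ : Fin n => Q.prod Q) (Measure.pi fun _ : Fin n => Q.prod Q) := by
    intro σ
    refine measurePreserving_pi (fun _ : Fin n => Q.prod Q) (fun _ : Fin n => Q.prod Q)
      (f := fun i => sw (σ i)) (fun i => ?_)
    cases σ i
    · exact MeasurePreserving.id _
    · exact Measure.measurePreserving_swap
  have h1 : ∑ σ : Fin n → Bool, ∫⁻ w, totW C f h T w ∂(Measure.pi fun _ : Fin n => Q.prod Q) =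
      ∫⁻ w, ∑ σ : Fin n → Bool, totW C f h T (fun i => sw (σ i) (w i))
        ∂(Measure.pi fun _ : Fin n => Q.prod Q) := by
    rw [lintegral_finsetSum _ (fun σ _ => measurable_of_countable _)]
    refine Finset.sum_congr rfl fun σ _ => ?_
    exact ((hmp σ).lintegral_comp (measurable_of_countable _)).symm
  have h2 : (2 : ℝ≥0∞) ^ n * ∫⁻ w, totW C f h T w ∂(Measure.pi fun _ : Fin n => Q.prod Q) ≤
      2 ^ n * (((2 * n) ^ d) ^ T : ℕ) := by
    have : (2 : ℝ≥0∞) ^ n * ∫⁻ w, totW C f h T w ∂(Measure.pi fun _ : Fin n => Q.prod Q) =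
        ∑ σ : Fin n → Bool, ∫⁻ w, totW C f h T w ∂(Measure.pi fun _ : Fin n => Q.prod Q) := by
      simp
    rw [this, h1]
    calc _ ≤ ∫⁻ w, (2 ^ n * (((2 * n) ^ d) ^ T : ℕ) : ℝ≥0∞)
          ∂(Measure.pi fun _ : Fin n => Q.prod Q) :=
          lintegral_mono (fun w => sum_totW_le C d hd hC f h T hn w)
      _ = _ := by simp
  exact (ENNReal.mul_le_mul_iff_right (by simp) (by finiteness)).mp h2

lemma prod_le_totW {X : Type*} (C : Set (X → Bool)) (f h : X → Bool) (T : ℕ) {n : ℕ}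
    (w : Fin n → X × X) (c : Fin T → X → Bool) (hc : ∀ i, c i ∈ C) :
    ∏ i, wt {a : X | h a ≠ f a ∧ a ∈ {a : X | ∀ j, c j a = h a}} (w i) ≤ totW C f h T w := by
  classical
  set B : Fin T → Finset X := fun j => (pts w).filter (fun a => c j a = true)
  have hB : B ∈ Fintype.piFinset (fun _ : Fin T => tracesOn C (pts w)) := by
    rw [Fintype.mem_piFinset]
    intro j
    simp only [tracesOn, Finset.mem_filter, Finset.mem_powerset]
    refine ⟨Finset.filter_subset _ _, c j, hc j, ?_⟩
    simp only [B]
  have hD : ∀ a ∈ pts w, (a ∈ {a : X | h a ≠ f a ∧ a ∈ {a : X | ∀ j, c j a = h a}} ↔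
      a ∈ dset f h B) := by
    intro a ha
    simp only [dset, B, Set.mem_ofPred_eq, Finset.mem_filter, ha, true_and]
    exact and_congr_right fun _ => forall_congr' fun j => Bool.eq_iff_iff
  unfold totW
  refine le_trans (le_of_eq ?_) (Finset.single_le_sum
    (f := fun B => ∏ i, wt (dset f h B) (w i)) (fun _ _ => zero_le) hB)
  refine Finset.prod_congr rfl fun i _ => ?_
  have h1 : (w i).1 ∈ pts w := by
    simp only [pts, Finset.mem_biUnion]; exact ⟨i, Finset.mem_univ _, by simp⟩
  have h2 : (w i).2 ∈ pts w := by
    simp only [pts, Finset.mem_biUnion]; exact ⟨i, Finset.mem_univ _, by simp⟩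
  simp only [wt, hD _ h1, hD _ h2]

lemma lintegral_pi_prod {X : Type*} [Countable X] [MeasurableSpace X] [MeasurableSingletonClass X]
    {n : ℕ} (Q : Measure X) [IsProbabilityMeasure Q] (v : X → ℝ≥0∞) :
    ∫⁻ z, ∏ i, v (z i) ∂(Measure.pi fun _ : Fin n => Q) = (∫⁻ x, v x ∂Q) ^ n := by
  rw [ProbabilityTheory.lintegral_prod_eq_prod_lintegral_of_indepFun Finset.univ
    (fun i (z : Fin n → X) => v (z i))
    (ProbabilityTheory.iIndepFun_pi (X := fun (_ : Fin n) => v)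
      (fun i => (measurable_of_countable v).aemeasurable)) (fun i => measurable_of_countable _)]
  have : ∀ i : Fin n, ∫⁻ z, v (z i) ∂(Measure.pi fun _ : Fin n => Q) = ∫⁻ x, v x ∂Q := fun i =>
    (measurePreserving_eval (fun _ : Fin n => Q) i).lintegral_comp (measurable_of_countable v)
  simp [this]

open Classical in
lemma lintegral_v_ge {X : Type*} [Countable X] [MeasurableSpace X] [MeasurableSingletonClass X]
    (Q : Measure X) [IsProbabilityMeasure Q] (E : Set X) (ε : ℝ) (hE : 2 * ε < (Q E).toReal) :
    ENNReal.ofReal (Real.exp (3/4 * ε)) ≤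
      ∫⁻ y, ENNReal.ofReal (Real.exp ((3/8) * (if y ∈ E then 1 else 0))) ∂Q := by
  have hv : ∀ y, ENNReal.ofReal (Real.exp ((3/8) * (if y ∈ E then 1 else 0))) =
      1 + E.indicator (fun _ => ENNReal.ofReal (Real.exp (3/8) - 1)) y := by
    intro y
    have : (1 : ℝ) ≤ Real.exp (3/8) := Real.one_le_exp (by norm_num)
    by_cases hy : y ∈ E
    · simp only [hy, if_true, Set.indicator_of_mem]
      rw [← ENNReal.ofReal_one, ← ENNReal.ofReal_add (by norm_num) (by linarith)]
      congr 1; simp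
    · simp [hy]
  have h1 : (1 : ℝ) ≤ Real.exp (3/8) := Real.one_le_exp (by norm_num)
  have hm : MeasurableSet E := E.to_countable.measurableSet
  simp_rw [hv]
  rw [lintegral_add_left measurable_const, lintegral_indicator_const hm]
  simp only [lintegral_const, measure_univ, mul_one]
  rw [← ENNReal.ofReal_toReal (measure_ne_top Q E), ← ENNReal.ofReal_mul (by linarith),
    ← ENNReal.ofReal_one, ← ENNReal.ofReal_add (by norm_num)
      (mul_nonneg (by linarith) ENNReal.toReal_nonneg)]
  apply ENNReal.ofReal_le_ofReal
  set p := (Q E).toReal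
  have hp0 : 0 ≤ p := ENNReal.toReal_nonneg
  have hp1 : p ≤ 1 := by
    have := ENNReal.toReal_mono ENNReal.one_ne_top (prob_le_one (μ := Q) (s := E))
    simpa [p] using this
  have hc := convexOn_exp.2 (Set.mem_univ 0) (Set.mem_univ (3/8)) (sub_nonneg.mpr hp1) hp0 (by ring)
  simp only [smul_eq_mul, mul_zero, zero_add, Real.exp_zero] at hc
  have : Real.exp (3/4 * ε) ≤ Real.exp (p * (3/8)) := Real.exp_le_exp.mpr (by linarith)
  linarith

lemma bad_lower {X : Type*} [Countable X] [MeasurableSpace X] [MeasurableSingletonClass X]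
    (C : Set (X → Bool)) (f h : X → Bool) (T : ℕ) {n : ℕ} (hn : 1 ≤ n) (ε : ℝ)
    (Q : Measure X) [IsProbabilityMeasure Q] (z : Fin n → X)
    (c : Fin T → X → Bool) (hc : ∀ i, c i ∈ C)
    (h1 : 2 * ε < (Q {a : X | h a ≠ f a ∧ a ∈ {a : X | ∀ j, c j a = h a}}).toReal)
    (h2 : (Set.ncard {i : Fin n | h (z i) ≠ f (z i) ∧ z i ∈ {a : X | ∀ j, c j a = h a}} : ℝ) / n
          ≤ ε) :
    ENNReal.ofReal (Real.exp (n * ε / 8)) ≤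
      ∫⁻ z', totW C f h T (fun i => (z i, z' i)) ∂(Measure.pi fun _ : Fin n => Q) := by
  classical
  set E := {a : X | h a ≠ f a ∧ a ∈ {a : X | ∀ j, c j a = h a}} with hEdef
  have hn0 : (0 : ℝ) < n := by exact_mod_cast hn
  have hk : (Set.ncard {i : Fin n | h (z i) ≠ f (z i) ∧ z i ∈ {a : X | ∀ j, c j a = h a}} : ℝ) =
      ∑ i, (if z i ∈ E then (1 : ℝ) else 0) := by
    rw [Set.ncard_eq_toFinset_card']
    simp [hEdef, Finset.sum_boole]
  rw [div_le_iff₀ hn0, hk] at h2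
  have hprod : ∀ z' : Fin n → X, ∏ i, wt E (z i, z' i) ≤ totW C f h T (fun i => (z i, z' i)) :=
    fun z' => prod_le_totW C f h T (fun i => (z i, z' i)) c hc
  replace h2 : ∑ i, (@ite ℝ (z i ∈ E) (Classical.propDecidable _) 1 0) ≤ ε * n := by
    convert! h2
  clear hk
  clear_value E
  have hu : ENNReal.ofReal (Real.exp (-(5/8) * (n * ε))) ≤
      ∏ i, ENNReal.ofReal (Real.exp (-(5/8) * (if z i ∈ E then 1 else 0))) := by
    rw [← ENNReal.ofReal_prod_of_nonneg (fun i _ => (Real.exp_pos _).le), ← Real.exp_sum,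
      ← Finset.mul_sum]
    apply ENNReal.ofReal_le_ofReal
    apply Real.exp_le_exp.mpr
    linarith
  have hv := lintegral_v_ge Q E ε h1
  calc ENNReal.ofReal (Real.exp (n * ε / 8))
      = ENNReal.ofReal (Real.exp (-(5/8) * (n * ε))) *
          (ENNReal.ofReal (Real.exp (3/4 * ε))) ^ n := by
        rw [← ENNReal.ofReal_pow (Real.exp_pos _).le, ← Real.exp_nat_mul,
          ← ENNReal.ofReal_mul (Real.exp_pos _).le, ← Real.exp_add]
        congr 2; ring
    _ ≤ (∏ i, ENNReal.ofReal (Real.exp (-(5/8) * (if z i ∈ E then 1 else 0)))) *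
        (∫⁻ y, ENNReal.ofReal (Real.exp ((3/8) * (if y ∈ E then 1 else 0))) ∂Q) ^ n := by
        gcongr
    _ = ∫⁻ z', ∏ i, wt E (z i, z' i) ∂(Measure.pi fun _ : Fin n => Q) := by
        rw [← lintegral_pi_prod, ← lintegral_const_mul _ (measurable_of_countable _)]
        simp only [wt, Finset.prod_mul_distrib]
    _ ≤ _ := lintegral_mono hprod

lemma double_sample {X : Type*} [Countable X] [MeasurableSpace X] [MeasurableSingletonClass X]
    {n : ℕ} (Q : Measure X) [IsProbabilityMeasure Q] (G : (Fin n → X × X) → ℝ≥0∞) :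
    ∫⁻ z, ∫⁻ z', G (fun i => (z i, z' i)) ∂(Measure.pi fun _ : Fin n => Q)
      ∂(Measure.pi fun _ : Fin n => Q) = ∫⁻ w, G w ∂(Measure.pi fun _ : Fin n => Q.prod Q) := by
  have h := (measurePreserving_arrowProdEquivProdArrow X X (Fin n) (fun _ => Q)
    (fun _ => Q)).lintegral_comp
    (f := fun p : (Fin n → X) × (Fin n → X) => G (fun i => (p.1 i, p.2 i)))
    (measurable_of_countable _)
  rw [lintegral_prod _ (measurable_of_countable _).aemeasurable] at h
  exact h.symm

/-- for a class `C` of VC dimension `d ≥ 2`, `n ≥ 1`, `δ > 0`,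
`ε ≥ 8ln(8/δ)/n + √(8d·ln(2n)/n)`, a positive integer `T ≤ 1/ε`, `f, h ∈ C`, and any
distribution `Q` on `X`: the probability over `z ∼ Qⁿ` that some `c ∈ C^T` has
`err_Q(h|_{S(h,c)}, f) > 2ε` and `err_z(h|_{S(h,c)}, f) ≤ ε` is at most `δ`. -/
theorem stmt8 {X : Type*} [Countable X] [MeasurableSpace X] [MeasurableSingletonClass X]
    (C : Set (X → Bool)) (d : ℕ) (hd : 2 ≤ d) (hC : VCDim C d)
    (n : ℕ) (hn : 1 ≤ n) (δ : ℝ) (hδ : 0 < δ) (ε : ℝ)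
    (hε : 8 * Real.log (8 / δ) / n + Real.sqrt (8 * (d : ℝ) * Real.log (2 * n) / n) ≤ ε)
    (T : ℕ) (hT : 1 ≤ T) (hTε : (T : ℝ) ≤ 1 / ε)
    (f h : X → Bool) (hf : f ∈ C) (hh : h ∈ C)
    (Q : Measure X) [IsProbabilityMeasure Q] :
    ((Measure.pi fun _ : Fin n => Q)
      {z : Fin n → X | ∃ c : Fin T → X → Bool, (∀ i, c i ∈ C) ∧
        2 * ε < (Q {a : X | h a ≠ f a ∧ a ∈ {a : X | ∀ j, c j a = h a}}).toReal ∧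
        (Set.ncard {i : Fin n | h (z i) ≠ f (z i) ∧ z i ∈ {a : X | ∀ j, c j a = h a}} : ℝ) / n
          ≤ ε}).toReal ≤ δ := by
  rcases le_or_gt 1 δ with hδ1 | hδ1
  · refine le_trans ?_ hδ1
    have := ENNReal.toReal_mono ENNReal.one_ne_top (prob_le_one (μ := Measure.pi fun _ : Fin n => Q)
      (s := {z : Fin n → X | ∃ c : Fin T → X → Bool, (∀ i, c i ∈ C) ∧
        2 * ε < (Q {a : X | h a ≠ f a ∧ a ∈ {a : X | ∀ j, c j a = h a}}).toReal ∧
        (Set.ncard {i : Fin n | h (z i) ≠ f (z i) ∧ z i ∈ {a : X | ∀ j, c j a = h a}} : ℝ) / n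
          ≤ ε}))
    simpa using this
  set A := {z : Fin n → X | ∃ c : Fin T → X → Bool, (∀ i, c i ∈ C) ∧
        2 * ε < (Q {a : X | h a ≠ f a ∧ a ∈ {a : X | ∀ j, c j a = h a}}).toReal ∧
        (Set.ncard {i : Fin n | h (z i) ≠ f (z i) ∧ z i ∈ {a : X | ∀ j, c j a = h a}} : ℝ) / n
          ≤ ε} with hA
  have hn0 : (0 : ℝ) < n := by exact_mod_cast hn
  have hmain : ENNReal.ofReal (Real.exp (n * ε / 8)) * (Measure.pi fun _ : Fin n => Q) A ≤
      (((2 * n) ^ d) ^ T : ℕ) := by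
    refine le_trans ?_ (lintegral_totW_le C d hd hC f h T hn Q)
    rw [← double_sample, ← lintegral_indicator_const A.to_countable.measurableSet]
    refine lintegral_mono fun z => ?_
    by_cases hz : z ∈ A
    · rw [Set.indicator_of_mem hz]
      obtain ⟨c, hc, h1, h2⟩ := hz
      exact bad_lower C f h T hn ε Q z c hc h1 h2
    · simp [hz]
  have hreal : Real.exp (n * ε / 8) * ((Measure.pi fun _ : Fin n => Q) A).toReal ≤
      (((2 * n : ℝ)) ^ d) ^ T := by
    have := ENNReal.toReal_mono (ENNReal.natCast_ne_top _) hmain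
    rw [ENNReal.toReal_mul, ENNReal.toReal_ofReal (Real.exp_pos _).le,
      ENNReal.toReal_natCast] at this
    exact_mod_cast this
  set P := ((Measure.pi fun _ : Fin n => Q) A).toReal
  set L := (d : ℝ) * Real.log (2 * n) with hL
  have hL0 : 0 ≤ L := by
    have : (1 : ℝ) ≤ n := by exact_mod_cast hn
    have := Real.log_nonneg (show (1 : ℝ) ≤ 2 * n by linarith)
    positivity
  have hcount : (((2 * n : ℝ)) ^ d) ^ T = Real.exp (T * L) := by
    rw [Real.exp_nat_mul, hL, Real.exp_nat_mul, Real.exp_log (by positivity)]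
  set b := Real.sqrt (8 * (d : ℝ) * Real.log (2 * n) / n) with hb
  have hb0 : 0 ≤ b := Real.sqrt_nonneg _
  have hb2 : b ^ 2 * n = 8 * L := by
    rw [hb, Real.sq_sqrt]
    · field_simp
      rw [hL]
    · rw [mul_assoc]; positivity
  set l := Real.log (8 / δ) with hl
  have hl0 : 0 < l := Real.log_pos (by rw [lt_div_iff₀ hδ]; linarith)
  have hε' : 8 * l + b * n ≤ ε * n := by
    have := mul_le_mul_of_nonneg_right hε hn0.le
    rwa [add_mul, div_mul_cancel₀ _ hn0.ne'] at this
  have ha0 : 0 < 8 * l / n := by positivity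
  have hε0 : 0 < ε := by linarith
  have hbε : b ≤ ε := by linarith
  have hTL : T * L ≤ b * n / 8 := by
    have hT' : T * ε ≤ 1 := by rwa [le_div_iff₀ hε0] at hTε
    have hTb : T * b ≤ 1 := le_trans (by gcongr) hT'
    have : T * L = (T * b) * (b * n / 8) := by linear_combination (-(T : ℝ) / 8) * hb2
    rw [this]
    exact mul_le_of_le_one_left (by positivity) hTb
  rw [hcount] at hreal
  have hP : P ≤ Real.exp (T * L - n * ε / 8) := by
    rw [Real.exp_sub, le_div_iff₀ (Real.exp_pos _), mul_comm]; exact hreal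
  calc P ≤ Real.exp (T * L - n * ε / 8) := hP
    _ ≤ Real.exp (-l) := Real.exp_le_exp.mpr (by linarith)
    _ = δ / 8 := by rw [Real.exp_neg, hl, Real.exp_log (by positivity), inv_div]
    _ ≤ δ := by linarith
end
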